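/- Let L ⊆ ℕ^n and L' ⊆ ℕ^{n'} be finite sets of squarefree exponent vectors, each closed under join ⊔ (componentwise maximum), and let λ : L → L' be a bijection such that for all a, b ∈ L: (i) a ≤ b if and only if λ(a) ≤ λ(b) (λ is an isomorphism of the divisibility orders, hence of the lattices), and (ii) a ⊓ b = 0 if and only if λ(a) ⊓ λ(b) = 0 (λ preserves the GCD graph). Then λ is additive on coprime pairs: for all a, b ∈ L with a ⊓ b = 0, one has a + b ∈ L and λ(a + b) = λ(a) + λ(b). -/

import Mathlib

/-!
Because `min x y + max x y = x + y` in each coordinate, the sum of two coprime exponent vectors is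
their join. An order isomorphism between join-closed sets preserves joins, so one that also
preserves coprimality preserves sums of coprime pairs.
-/

theorem pi_inf_add_sup {ι : Type*} {M : ι → Type*} [∀ i, LinearOrder (M i)]
    [∀ i, AddCommSemigroup (M i)] (a b : ∀ i, M i) : a ⊓ b + a ⊔ b = a + b :=
  funext fun i => min_add_max (a i) (b i)

theorem pi_add_eq_sup_of_inf_eq_zero {ι : Type*} {M : ι → Type*} [∀ i, LinearOrder (M i)]
    [∀ i, AddCommMonoid (M i)] {a b : ∀ i, M i} (hab : a ⊓ b = 0) : a + b = a ⊔ b := by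
  rw [← pi_inf_add_sup, hab, zero_add]

theorem coe_orderIso_sup_of_supClosed {α β : Type*} [SemilatticeSup α] [SemilatticeSup β]
    {S : Set α} {T : Set β} (hS : SupClosed S) (hT : SupClosed T) (e : S ≃o T) (a b : S) :
    (e ⟨a ⊔ b, hS a.2 b.2⟩ : β) = (e a : β) ⊔ e b := by
  let _ : SemilatticeSup S := Subtype.semilatticeSup fun _ _ ha hb => hS ha hb
  let _ : SemilatticeSup T := Subtype.semilatticeSup fun _ _ ha hb => hT ha hb
  exact congrArg Subtype.val (e.map_sup a b)

theorem stmt_10_general {ι κ : Type*} {M : ι → Type*} {N : κ → Type*}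
    [∀ i, LinearOrder (M i)] [∀ i, AddCommMonoid (M i)]
    [∀ k, LinearOrder (N k)] [∀ k, AddCommMonoid (N k)]
    {S : Set (∀ i, M i)} {T : Set (∀ k, N k)} (hS : SupClosed S) (hT : SupClosed T) (e : S ≃o T)
    (a b : S) (hab : (a : ∀ i, M i) ⊓ b = 0) (heab : (e a : ∀ k, N k) ⊓ e b = 0) :
    ∃ h : (a : ∀ i, M i) + b ∈ S, (e ⟨a + b, h⟩ : ∀ k, N k) = (e a : ∀ k, N k) + e b := by
  simp only [pi_add_eq_sup_of_inf_eq_zero hab, pi_add_eq_sup_of_inf_eq_zero heab]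
  exact ⟨hS a.2 b.2, coe_orderIso_sup_of_supClosed hS hT e a b⟩

/-- Let `L ⊆ ℕ^n` and `L' ⊆ ℕ^{n'}` be finite sets of squarefree
exponent vectors, each closed under join `⊔` (componentwise maximum), and let
`λ : L → L'` be a bijection such that for all `a, b ∈ L`:
(i) `a ≤ b ↔ λ a ≤ λ b` (an isomorphism of the divisibility orders/lattices), and
(ii) `a ⊓ b = 0 ↔ λ a ⊓ λ b = 0` (`λ` preserves the GCD graph).
Then `λ` is additive on coprime pairs: for all `a, b ∈ L` with `a ⊓ b = 0`, one has
`a + b ∈ L` and `λ (a + b) = λ a + λ b`. -/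
theorem stmt_10 (n n' : ℕ) (L : Finset (Fin n → ℕ)) (L' : Finset (Fin n' → ℕ))
    (hsf : ∀ a ∈ L, ∀ i, a i ≤ 1) (hsf' : ∀ a ∈ L', ∀ i, a i ≤ 1)
    (hjoin : ∀ a ∈ L, ∀ b ∈ L, a ⊔ b ∈ L)
    (hjoin' : ∀ a ∈ L', ∀ b ∈ L', a ⊔ b ∈ L')
    (lam : {x // x ∈ L} → {y // y ∈ L'}) (hbij : Function.Bijective lam)
    (hord : ∀ a b : {x // x ∈ L},
      (a : Fin n → ℕ) ≤ (b : Fin n → ℕ) ↔ (lam a : Fin n' → ℕ) ≤ (lam b : Fin n' → ℕ))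
    (hgcd : ∀ a b : {x // x ∈ L},
      (a : Fin n → ℕ) ⊓ (b : Fin n → ℕ) = 0 ↔
      (lam a : Fin n' → ℕ) ⊓ (lam b : Fin n' → ℕ) = 0) :
    ∀ a b : {x // x ∈ L}, (a : Fin n → ℕ) ⊓ (b : Fin n → ℕ) = 0 →
      ∃ h : (a : Fin n → ℕ) + (b : Fin n → ℕ) ∈ L,
        (lam ⟨(a : Fin n → ℕ) + (b : Fin n → ℕ), h⟩ : Fin n' → ℕ) =
          (lam a : Fin n' → ℕ) + (lam b : Fin n' → ℕ) := by
  intro a b hab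
  let e : (L : Set (Fin n → ℕ)) ≃o (L' : Set (Fin n' → ℕ)) :=
    { Equiv.ofBijective lam hbij with map_rel_iff' := (hord _ _).symm }
  exact stmt_10_general (fun a ha b hb => hjoin a ha b hb) (fun a ha b hb => hjoin' a ha b hb)
    e a b hab ((hgcd a b).1 hab)
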